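/- arXiv:2603.26392 — 2 statements merged into one kernel-verified Lean document; each statement's English description precedes it below -/
import Mathlib

section
/- Let X be a measurable space, let μ be a measure on X, let ν₁ and ν₂ be measures on X with ν₁ ≤ μ and ν₂ ≤ μ, let f, g : X → ℝ ∪ {−∞} be measurable, and let δ > 0 and M ∈ ℝ. Then ν₁({f < g − δ}) + ν₂({g < f − δ}) ≤ μ({f < M}) + μ({g < M}) + (1/δ)·∫_X |max(f, M) − max(g, M)| dμ. -/
open MeasureTheory

theorem aux_pt (a b : EReal) (ha : a ≠ ⊤) (hb : b ≠ ⊤) (δ M : ℝ) (hδ : 0 < δ)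
    (h : a < b - (δ : EReal)) (hM : ¬ a < (M : EReal)) :
    (max a (M : EReal)).toReal + δ < (max b (M : EReal)).toReal := by
  have hM' := not_lt.1 hM
  induction a with
  | top => exact absurd rfl ha
  | bot => simp at hM'
  | coe a =>
    induction b with
    | top => exact absurd rfl hb
    | bot => simp at h
    | coe b =>
      have h1 : a < b - δ := by exact_mod_cast h
      have h2 : M ≤ a := by exact_mod_cast hM'
      have h3 : (M : EReal) ≤ (b : EReal) := by
        have : M ≤ b := by linarith
        exact_mod_cast this
      rw [max_eq_left hM', max_eq_left h3]
      simp only [EReal.toReal_coe]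
      linarith

/-- Two-sided truncation–Chebyshev estimate (inequality (**) in the proof of
Theorem 3.10): if `ν₁ ≤ μ` and `ν₂ ≤ μ`, then for measurable
`f, g : X → ℝ ∪ {−∞}`, `δ > 0` and `M ∈ ℝ`,
`ν₁({f < g − δ}) + ν₂({g < f − δ})
  ≤ μ({f < M}) + μ({g < M}) + (1/δ) ∫ |max(f,M) − max(g,M)| dμ`. -/
theorem stmt_2 {X : Type*} [MeasurableSpace X]
    (μ ν₁ ν₂ : Measure X) (hν₁ : ν₁ ≤ μ) (hν₂ : ν₂ ≤ μ)
    (f g : X → EReal) (hf : Measurable f) (hg : Measurable g)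
    (hf' : ∀ x, f x ≠ ⊤) (hg' : ∀ x, g x ≠ ⊤)
    (δ : ℝ) (hδ : 0 < δ) (M : ℝ) :
    ν₁ {x | f x < g x - (δ : EReal)} + ν₂ {x | g x < f x - (δ : EReal)} ≤
      μ {x | f x < (M : EReal)} + μ {x | g x < (M : EReal)} +
        ENNReal.ofReal (1 / δ) *
          ∫⁻ x, ENNReal.ofReal
            |(max (f x) (M : EReal)).toReal - (max (g x) (M : EReal)).toReal| ∂μ := by
  set F : X → ℝ := fun x => (max (f x) (M : EReal)).toReal with hF
  set G : X → ℝ := fun x => (max (g x) (M : EReal)).toReal with hG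
  have mF : Measurable F := (hf.max measurable_const).ereal_toReal
  have mG : Measurable G := (hg.max measurable_const).ereal_toReal
  have h1 : ν₁ {x | f x < g x - (δ : EReal)} ≤ μ {x | f x < (M : EReal)} + μ {x | F x + δ < G x} := by
    refine (hν₁ _).trans ((measure_mono ?_).trans (measure_union_le _ _))
    intro x hx
    by_cases h : f x < (M : EReal)
    · exact Or.inl h
    · exact Or.inr (aux_pt _ _ (hf' x) (hg' x) δ M hδ hx h)
  have h2 : ν₂ {x | g x < f x - (δ : EReal)} ≤ μ {x | g x < (M : EReal)} + μ {x | G x + δ < F x} := by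
    refine (hν₂ _).trans ((measure_mono ?_).trans (measure_union_le _ _))
    intro x hx
    by_cases h : g x < (M : EReal)
    · exact Or.inl h
    · exact Or.inr (aux_pt _ _ (hg' x) (hf' x) δ M hδ hx h)
  have h3 : μ {x | F x + δ < G x} + μ {x | G x + δ < F x} ≤
      ENNReal.ofReal (1 / δ) * ∫⁻ x, ENNReal.ofReal |F x - G x| ∂μ := by
    rw [← measure_union _ (measurableSet_lt (mG.add_const δ) mF)]
    · have hc := mul_meas_ge_le_lintegral (μ := μ) (f := fun x => ENNReal.ofReal |F x - G x|)
        ((mF.sub mG).abs.ennreal_ofReal) (ENNReal.ofReal δ)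
      calc _ ≤ μ {x | ENNReal.ofReal δ ≤ ENNReal.ofReal |F x - G x|} := by
            apply measure_mono
            rintro x (hx | hx)
            · apply ENNReal.ofReal_le_ofReal
              simp only [Set.mem_setOf_eq] at hx
              rw [abs_sub_comm]
              exact le_trans (by linarith) (le_abs_self _)
            · apply ENNReal.ofReal_le_ofReal
              simp only [Set.mem_setOf_eq] at hx
              exact le_trans (by linarith) (le_abs_self _)
        _ = ENNReal.ofReal (1 / δ) * (ENNReal.ofReal δ *
              μ {x | ENNReal.ofReal δ ≤ ENNReal.ofReal |F x - G x|}) := by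
            rw [← mul_assoc, ← ENNReal.ofReal_mul (by positivity), one_div_mul_cancel hδ.ne']
            simp
        _ ≤ _ := by gcongr
    · rw [Set.disjoint_left]
      intro x hx hy
      simp only [Set.mem_setOf_eq] at hx hy
      linarith
  calc _ ≤ _ := add_le_add h1 h2
    _ = μ {x | f x < (M : EReal)} + μ {x | g x < (M : EReal)} +
        (μ {x | F x + δ < G x} + μ {x | G x + δ < F x}) := by ring
    _ ≤ _ := by gcongr
end

section
/- Let X be a measurable space, let μ be a measure on X, let (ν_j)_{j∈ℕ} be measures on X with ν_j ≤ μ for all j, and let f_j, f : X → ℝ ∪ {−∞} be measurable functions. Assume: (i) for every k > 0, lim_{j→∞} ∫_X |max(f_j, −k) − max(f, −k)| dμ = 0; (ii) lim_{k→∞} sup_{j∈ℕ} μ({f_j < −k}) = 0 and lim_{k→∞} μ({f < −k}) = 0. Then for every δ > 0, lim_{j→∞} ν_j({f_j < f − δ}) = 0. -/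
open MeasureTheory Filter

/-- The conclusion established in the proof of ii) ⇒ iii) of Theorem 3.10:
if `ν_j ≤ μ` for all `j`, the truncations `max(f_j, −k)` converge to `max(f, −k)`
in `L¹(μ)` for every `k > 0`, and the tails `μ({f_j < −k})` (uniformly in `j`)
and `μ({f < −k})` go to `0` as `k → ∞`, then `ν_j({f_j < f − δ}) → 0` for
every `δ > 0`. -/
theorem stmt_6 {X : Type*} [MeasurableSpace X]
    (μ : Measure X) (ν : ℕ → Measure X) (hν : ∀ j, ν j ≤ μ)
    (fj : ℕ → X → EReal) (f : X → EReal)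
    (hfj : ∀ j, Measurable (fj j)) (hf : Measurable f)
    (hfj' : ∀ j x, fj j x ≠ ⊤) (hf' : ∀ x, f x ≠ ⊤)
    (h1 : ∀ k : ℝ, 0 < k →
      Tendsto (fun j => ∫⁻ x, ENNReal.ofReal
          |(max (fj j x) ((-k : ℝ) : EReal)).toReal -
            (max (f x) ((-k : ℝ) : EReal)).toReal| ∂μ) atTop (nhds 0))
    (h2 : Tendsto (fun k : ℝ => ⨆ j, μ {x | fj j x < ((-k : ℝ) : EReal)})
      atTop (nhds 0))
    (h3 : Tendsto (fun k : ℝ => μ {x | f x < ((-k : ℝ) : EReal)}) atTop (nhds 0)) :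
    ∀ δ : ℝ, 0 < δ →
      Tendsto (fun j => ν j {x | fj j x < f x - (δ : EReal)}) atTop (nhds 0) := by
  intro δ hδ
  rw [ENNReal.tendsto_nhds_zero]
  intro ε hε
  have hε2 : 0 < ε / 2 := ENNReal.half_pos hε.ne'
  obtain ⟨k, hk, hk0⟩ := (((ENNReal.tendsto_nhds_zero.1 h2) (ε / 2) hε2).and
    (eventually_gt_atTop 0)).exists
  have hd0 : ENNReal.ofReal δ ≠ 0 := by simpa using hδ
  have hdt : ENNReal.ofReal δ ≠ ⊤ := ENNReal.ofReal_ne_top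
  have h4 := ENNReal.Tendsto.div_const (h1 k hk0) (b := ENNReal.ofReal δ) (Or.inr hd0)
  rw [ENNReal.zero_div] at h4
  filter_upwards [(ENNReal.tendsto_nhds_zero.1 h4) (ε / 2) hε2] with j hj
  have hsub : {x | fj j x < f x - (δ : EReal)} ⊆ {x | fj j x < ((-k : ℝ) : EReal)} ∪
      {x | ENNReal.ofReal δ ≤ ENNReal.ofReal |(max (fj j x) ((-k : ℝ) : EReal)).toReal -
            (max (f x) ((-k : ℝ) : EReal)).toReal|} := by
    intro x hx
    simp only [Set.mem_setOf_eq, Set.mem_union] at hx ⊢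
    by_cases hlt : fj j x < ((-k : ℝ) : EReal)
    · exact Or.inl hlt
    right
    have hle := not_lt.1 hlt
    have ha := hfj' j x
    have hb := hf' x
    generalize fj j x = a at *
    generalize f x = b at *
    induction a with
    | bot => simp at hle
    | top => exact absurd rfl ha
    | coe a =>
      induction b with
      | bot => simp at hx
      | top => exact absurd rfl hb
      | coe b =>
        have hx' : a < b - δ := by exact_mod_cast hx
        have hle' : -k ≤ a := by exact_mod_cast hle
        have hbk : -k ≤ b := by linarith
        rw [max_eq_left (EReal.coe_le_coe_iff.2 hle'), max_eq_left (EReal.coe_le_coe_iff.2 hbk),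
          EReal.toReal_coe, EReal.toReal_coe]
        apply ENNReal.ofReal_le_ofReal
        rw [abs_sub_comm]
        exact le_trans (by linarith) (le_abs_self _)
  have hm : Measurable (fun x => ENNReal.ofReal |(max (fj j x) ((-k : ℝ) : EReal)).toReal -
            (max (f x) ((-k : ℝ) : EReal)).toReal|) := by
    have e1 := ((hfj j).max (measurable_const (a := ((-k : ℝ) : EReal)))).ereal_toReal
    have e2 := (hf.max (measurable_const (a := ((-k : ℝ) : EReal)))).ereal_toReal
    exact (measurable_norm.comp (e1.sub e2)).ennreal_ofReal
  calc ν j _ ≤ μ _ := hν j _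
    _ ≤ _ := (measure_mono hsub).trans (measure_union_le _ _)
    _ ≤ ε / 2 + ε / 2 := add_le_add
        ((le_iSup (fun j => μ {x | fj j x < ((-k : ℝ) : EReal)}) j).trans hk)
        ((meas_ge_le_lintegral_div hm.aemeasurable hd0 hdt).trans hj)
    _ = ε := ENNReal.add_halves ε
end
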